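/- Let β > 2, let (α_N) satisfy α_N > 0 and α_N → 0, let p(N) ∈ (0,1] satisfy N·p(N) → ∞, and assume p(N)·N·α_N → ∞. Then the pushforward of the quenched Gibbs measure μ^ε_{N,α_N,β} under σ ↦ (m₁(σ), m₂(σ)) converges in distribution in probability to (1/2)(δ_{(m⁺(β/2), m⁺(β/2))} + δ_{(m⁻(β/2), m⁻(β/2))}): for every bounded continuous f : ℝ² → ℝ and every η > 0, the P-probability that |∫ f(m₁,m₂) dμ^ε_{N,α_N,β} − ∫ f d((1/2)(δ_{(m⁺(β/2), m⁺(β/2))} + δ_{(m⁻(β/2), m⁻(β/2))}))| > η tends to 0 as N → ∞ through even integers. -/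

import Mathlib

open MeasureTheory Filter

noncomputable section

/-- The spin value ±1 associated to a Boolean. -/
def spinVal (s : Bool) : ℝ := if s then 1 else -1

/-- A spin configuration on `N = 2n` sites, split into the two blocks
`B₁` (first component) and `B₂` (second component); the perfect matching
pairs the `i`-th spin of `B₁` with the `i`-th spin of `B₂`. -/
abbrev TwoConf (n : ℕ) := (Fin n → Bool) × (Fin n → Bool)

/-- Block magnetization `m₁(σ) = (2/N) ∑_{i ∈ B₁} σᵢ` with `N = 2n`. -/
def mag1 (n : ℕ) (σ : TwoConf n) : ℝ := (2 / (2 * n : ℝ)) * ∑ i, spinVal (σ.1 i)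

/-- Block magnetization `m₂(σ) = (2/N) ∑_{i ∈ B₂} σᵢ` with `N = 2n`. -/
def mag2 (n : ℕ) (σ : TwoConf n) : ℝ := (2 / (2 * n : ℝ)) * ∑ i, spinVal (σ.2 i)

/-- The diluted Hamiltonian
`H^ε_{N,α,β}(σ) = −(β/(2N))(∑_{i,j∈B₁} σᵢσⱼ + ∑_{i,j∈B₂} σᵢσⱼ)
  − α ∑_{i∈B₁} ε_i σᵢ σ_{i+N/2}` with `N = 2n`. -/
def dilH (n : ℕ) (α β : ℝ) (ε : Fin n → Bool) (σ : TwoConf n) : ℝ :=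
  -(β / (2 * (2 * n : ℝ))) *
      ((∑ i, ∑ j, spinVal (σ.1 i) * spinVal (σ.1 j)) +
        ∑ i, ∑ j, spinVal (σ.2 i) * spinVal (σ.2 j))
    - α * ∑ i, (if ε i then (1 : ℝ) else 0) * (spinVal (σ.1 i) * spinVal (σ.2 i))

/-- The distribution of the magnetization vector `(m₁, m₂)` under the quenched Gibbs
measure `μ^ε_{N,α,β}`, i.e. the pushforward of `μ^ε_{N,α,β}` under `σ ↦ (m₁(σ), m₂(σ))`. -/
def dilMagDist (n : ℕ) (α β : ℝ) (ε : Fin n → Bool) : Measure (ℝ × ℝ) :=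
  (∑ σ : TwoConf n, ENNReal.ofReal (Real.exp (-dilH n α β ε σ)))⁻¹ •
    ∑ σ : TwoConf n,
      ENNReal.ofReal (Real.exp (-dilH n α β ε σ)) • Measure.dirac (mag1 n σ, mag2 n σ)

/-- The probability, under i.i.d. Bernoulli(q) dilution variables `(ε_i)_{i ∈ B₁}`,
of a set `A` of dilution configurations. -/
def bernProb (n : ℕ) (q : ℝ) (A : Set (Fin n → Bool)) : ℝ :=
  ∑ ε : Fin n → Bool, A.indicator (fun ε => ∏ i, if ε i then q else 1 - q) ε

def sm {n : ℕ} (s : Fin n → Bool) : ℝ := ∑ i, spinVal (s i)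

def xov {n : ℕ} (ε : Fin n → Bool) (σ : TwoConf n) : ℝ :=
  ∑ i, (if ε i then (1 : ℝ) else 0) * (spinVal (σ.1 i) * spinVal (σ.2 i))

def cw (n : ℕ) (β : ℝ) (s : Fin n → Bool) : ℝ := Real.exp (β / (4 * n) * sm s ^ 2)

def epsK {n : ℕ} (ε : Fin n → Bool) : ℝ := ∑ i, (if ε i then (1 : ℝ) else 0)

lemma spinVal_not (b : Bool) : spinVal (!b) = - spinVal b := by
  cases b <;> simp [spinVal]

lemma abs_spinVal (b : Bool) : |spinVal b| = 1 := by
  cases b <;> simp [spinVal]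

lemma exp_neg_dilH (n : ℕ) (α β : ℝ) (ε : Fin n → Bool) (σ : TwoConf n) :
    Real.exp (-dilH n α β ε σ) = cw n β σ.1 * cw n β σ.2 * Real.exp (α * xov ε σ) := by
  unfold dilH cw xov sm
  rw [← Real.exp_add, ← Real.exp_add]
  congr 1
  simp only [← Finset.mul_sum, ← Finset.sum_mul]
  rw [show (2 * (2 * (n:ℝ))) = 4 * n by ring]
  ring

lemma mag1_eq (n : ℕ) (σ : TwoConf n) : mag1 n σ = sm σ.1 / n := by
  unfold mag1 sm
  rcases Nat.eq_zero_or_pos n with h | h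
  · simp [h]
  · field_simp

lemma mag2_eq (n : ℕ) (σ : TwoConf n) : mag2 n σ = sm σ.2 / n := by
  unfold mag2 sm
  rcases Nat.eq_zero_or_pos n with h | h
  · simp [h]
  · field_simp

lemma sum_prod_bool (n : ℕ) (g : Fin n → Bool → ℝ) :
    ∑ s : Fin n → Bool, ∏ i, g i (s i) = ∏ i, (g i true + g i false) := by
  have := Finset.prod_univ_sum (fun _ : Fin n => (Finset.univ : Finset Bool)) g
  simp only [Fintype.piFinset_univ] at this
  rw [← this]
  simp

lemma sum_exp_sm (n : ℕ) (y : ℝ) :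
    ∑ s : Fin n → Bool, Real.exp (y * sm s) = (2 * Real.cosh y) ^ n := by
  have := sum_prod_bool n (fun _ b => Real.exp (y * spinVal b))
  simp only [sm, Finset.mul_sum, Real.exp_sum]
  rw [this]
  simp [spinVal, Real.cosh_eq]
  ring

def rate (γ a : ℝ) : ℝ := Real.log (Real.cosh (γ * a)) - γ * a ^ 2 / 2

lemma sm_int {n : ℕ} (s : Fin n → Bool) :
    ∃ k : ℤ, k ∈ Finset.Icc (-(n:ℤ)) n ∧ (k : ℝ) = sm s := by
  have hb : ∀ m : ℤ, (m : ℝ) = sm s → m ∈ Finset.Icc (-(n:ℤ)) n := by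
    intro m hm
    have : |sm s| ≤ n := by
      unfold sm
      refine (Finset.abs_sum_le_sum_abs _ _).trans ?_
      simp [abs_spinVal]
    rw [← hm, abs_le] at this
    rw [Finset.mem_Icc]
    exact ⟨by exact_mod_cast this.1, by exact_mod_cast this.2⟩
  have he : (((∑ i, if s i then (1:ℤ) else -1) : ℤ) : ℝ) = sm s := by
    push_cast
    unfold sm spinVal
    apply Finset.sum_congr rfl
    intro i _
    split_ifs <;> simp
  exact ⟨_, hb _ he, he⟩

lemma tilt_eq (n : ℕ) (γ a : ℝ) :
    ∑ s : Fin n → Bool, Real.exp (γ * a * sm s - n * (γ * a ^ 2 / 2)) =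
      2 ^ n * Real.exp (n * rate γ a) := by
  simp only [Real.exp_sub, ← Finset.sum_div]
  rw [sum_exp_sm, mul_pow, rate, mul_sub, Real.exp_sub, Real.exp_nat_mul (Real.log _),
    Real.exp_log (Real.cosh_pos _), mul_div_assoc]

lemma cw_sum_lower (n : ℕ) (hn : 0 < n) (β a : ℝ) (hβ : 0 < β) :
    2 ^ n * Real.exp (n * rate (β / 2) a) ≤ ∑ s : Fin n → Bool, cw n β s := by
  rw [← tilt_eq n]
  apply Finset.sum_le_sum
  intro s _
  unfold cw
  apply Real.exp_le_exp.2
  have hn' : (0:ℝ) < n := by exact_mod_cast hn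
  have : β / (4 * n) * sm s ^ 2 - (β / 2 * a * sm s - n * (β / 2 * a ^ 2 / 2))
      = β / (4 * n) * (sm s - n * a) ^ 2 := by
    field_simp
    ring
  have h2 : 0 ≤ β / (4 * n) * (sm s - n * a) ^ 2 := by positivity
  linarith

open Classical in
lemma cw_ldp (n : ℕ) (hn : 0 < n) (β m δ c : ℝ) (hβ : 0 < β)
    (hc : ∀ a : ℝ, |a| ≤ 1 → δ ≤ |(|a| - m)| → rate (β / 2) a + c ≤ rate (β / 2) m) :
    ∑ s : Fin n → Bool, (if δ ≤ |(|sm s / n| - m)| then cw n β s else 0) ≤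
      (2 * n + 1) * Real.exp (-(c * n)) * ∑ s : Fin n → Bool, cw n β s := by
  have hn' : (0:ℝ) < n := by exact_mod_cast hn
  set T := (Finset.Icc (-(n:ℤ)) n).filter (fun k : ℤ => δ ≤ |(|(k:ℝ) / n| - m)|) with hT
  have h1 : ∑ s : Fin n → Bool, (if δ ≤ |(|sm s / n| - m)| then cw n β s else 0) ≤
      ∑ s : Fin n → Bool, ∑ k ∈ T,
        Real.exp (β / 2 * ((k:ℝ) / n) * sm s - n * (β / 2 * ((k:ℝ) / n) ^ 2 / 2)) := by
    apply Finset.sum_le_sum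
    intro s _
    split_ifs with h
    · obtain ⟨k, hk, hks⟩ := sm_int s
      have hkT : k ∈ T := by
        rw [hT, Finset.mem_filter, hks]
        exact ⟨hk, h⟩
      refine le_trans (le_of_eq ?_) (Finset.single_le_sum (f := fun k : ℤ =>
        Real.exp (β / 2 * ((k:ℝ) / n) * sm s - n * (β / 2 * ((k:ℝ) / n) ^ 2 / 2)))
        (fun _ _ => (Real.exp_pos _).le) hkT)
      simp only [cw, hks]
      congr 1
      field_simp
      ring
    · exact Finset.sum_nonneg (fun _ _ => (Real.exp_pos _).le)
  refine h1.trans ?_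
  rw [Finset.sum_comm]
  have h2 : ∀ k ∈ T, ∑ s : Fin n → Bool,
      Real.exp (β / 2 * ((k:ℝ) / n) * sm s - n * (β / 2 * ((k:ℝ) / n) ^ 2 / 2)) ≤
      Real.exp (-(c * n)) * ∑ s : Fin n → Bool, cw n β s := by
    intro k hk
    rw [hT, Finset.mem_filter, Finset.mem_Icc] at hk
    rw [tilt_eq n]
    refine le_trans ?_ (mul_le_mul_of_nonneg_left (cw_sum_lower n hn β m hβ) (Real.exp_pos _).le)
    rw [mul_left_comm, ← Real.exp_add]
    apply mul_le_mul_of_nonneg_left _ (by positivity)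
    apply Real.exp_le_exp.2
    have := hc ((k:ℝ) / n) (by
      rw [abs_div, Nat.abs_cast, div_le_one hn', abs_le]
      exact ⟨by exact_mod_cast hk.1.1, by exact_mod_cast hk.1.2⟩) hk.2
    nlinarith
  refine (Finset.sum_le_card_nsmul _ _ _ h2).trans ?_
  rw [nsmul_eq_mul, mul_assoc]
  apply mul_le_mul_of_nonneg_right
  · have : T.card ≤ 2 * n + 1 := by
      refine (Finset.card_filter_le _ _).trans ?_
      rw [Int.card_Icc]
      omega
    exact_mod_cast this
  · apply mul_nonneg (Real.exp_pos _).le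
    exact Finset.sum_nonneg (fun _ _ => (Real.exp_pos _).le)

lemma hasDerivAt_tanh' (x : ℝ) : HasDerivAt Real.tanh (1 / Real.cosh x ^ 2) x := by
  have h := (Real.hasDerivAt_sinh x).div (Real.hasDerivAt_cosh x) (Real.cosh_pos x).ne'
  have e : Real.tanh = fun y => Real.sinh y / Real.cosh y := by
    funext y
    exact Real.tanh_eq_sinh_div_cosh y
  rw [e]
  refine HasDerivAt.congr_deriv h ?_
  congr 1
  have := Real.cosh_sq x
  linarith

def gap (γ x : ℝ) : ℝ := Real.tanh (γ * x) - x

lemma hasDerivAt_gap (γ x : ℝ) : HasDerivAt (gap γ) (γ / Real.cosh (γ * x) ^ 2 - 1) x := by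
  have h1 : HasDerivAt (fun y : ℝ => γ * y) γ x := by
    simpa using (hasDerivAt_id x).const_mul γ
  have h := ((hasDerivAt_tanh' (γ * x)).comp x h1).sub (hasDerivAt_id x)
  refine HasDerivAt.congr_deriv h ?_
  ring

lemma continuous_gap (γ : ℝ) : Continuous (gap γ) :=
  continuous_iff_continuousAt.2 (fun x => (hasDerivAt_gap γ x).continuousAt)

lemma gap_concave (γ : ℝ) (hγ : 0 < γ) : StrictConcaveOn ℝ (Set.Ici 0) (gap γ) := by
  apply StrictAntiOn.strictConcaveOn_of_deriv (convex_Ici 0) (continuous_gap γ).continuousOn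
  intro x hx y hy hxy
  rw [interior_Ici] at hx hy
  simp only [Set.mem_Ioi] at hx hy
  rw [(hasDerivAt_gap γ x).deriv, (hasDerivAt_gap γ y).deriv]
  have h1 : Real.cosh (γ * x) < Real.cosh (γ * y) := by
    rw [Real.cosh_lt_cosh, abs_of_pos (by positivity), abs_of_pos (by positivity)]
    exact mul_lt_mul_of_pos_left hxy hγ
  have h2 : 0 < Real.cosh (γ * x) := Real.cosh_pos _
  gcongr

lemma mp_pos (γ : ℝ) (hγ : 1 < γ) (m : ℝ)
    (hmax : ∀ z : ℝ, z = Real.tanh (γ * z) → z ≤ m) : 0 < m := by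
  have hd := hasDerivAt_gap γ 0
  simp only [mul_zero, Real.cosh_zero, one_pow, div_one] at hd
  have h0 : gap γ 0 = 0 := by simp [gap]
  have hex : ∃ x, 0 < x ∧ x < 1 ∧ 0 < gap γ x := by
    have hs := hasDerivAt_iff_tendsto_slope.1 hd
    have h1 : ∀ᶠ x in nhdsWithin (0:ℝ) {0}ᶜ, 0 < slope (gap γ) 0 x :=
      hs.eventually (lt_mem_nhds (by linarith))
    have h2 : ∀ᶠ x in nhdsWithin (0:ℝ) (Set.Ioi 0), 0 < slope (gap γ) 0 x :=
      h1.filter_mono (nhdsWithin_mono _ (fun x hx => ne_of_gt hx))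
    have h3 : ∀ᶠ x in nhdsWithin (0:ℝ) (Set.Ioi 0), x ∈ Set.Ioo (0:ℝ) 1 :=
      Ioo_mem_nhdsGT one_pos
    obtain ⟨x, hx, hx'⟩ := (h2.and h3).exists
    refine ⟨x, hx'.1, hx'.2, ?_⟩
    rw [slope_def_field, h0, sub_zero, sub_zero] at hx
    exact (div_pos_iff_of_pos_right hx'.1).1 hx
  obtain ⟨x, hx0, hx1, hx⟩ := hex
  have hg1 : gap γ 1 < 0 := by
    unfold gap
    have := Real.tanh_lt_one (γ * 1)
    linarith
  have := intermediate_value_Icc' hx1.le (continuous_gap γ).continuousOn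
  obtain ⟨z, hz, hz0⟩ := this (⟨hg1.le, hx.le⟩ : (0:ℝ) ∈ Set.Icc (gap γ 1) (gap γ x))
  have := hmax z (by unfold gap at hz0; linarith)
  linarith [hz.1]

lemma gap_pos (γ : ℝ) (hγ : 0 < γ) (m : ℝ) (hfix : m = Real.tanh (γ * m))
    (x : ℝ) (hx : 0 < x) (hxm : x < m) : 0 < gap γ x := by
  have h0 : gap γ 0 = 0 := by simp [gap]
  have h1 : gap γ m = 0 := by unfold gap; linarith
  have hm : 0 < m := hx.trans hxm
  have : (1 - x / m) • gap γ 0 + (x / m) • gap γ m <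
      gap γ ((1 - x / m) • 0 + (x / m) • m) :=
    (gap_concave γ hγ).2 (Set.mem_Ici.2 le_rfl) (Set.mem_Ici.2 hm.le) hm.ne (by rw [sub_pos, div_lt_one hm]; exact hxm) (by positivity)
    (by ring)
  rw [h0, h1] at this
  simp only [smul_eq_mul, mul_zero, zero_add, div_mul_cancel₀ x hm.ne', add_zero] at this
  exact this

lemma gap_neg (γ : ℝ) (hγ : 0 < γ) (m : ℝ) (hm : 0 < m) (hfix : m = Real.tanh (γ * m))
    (x : ℝ) (hxm : m < x) : gap γ x < 0 := by
  have h0 : gap γ 0 = 0 := by simp [gap]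
  have h1 : gap γ m = 0 := by unfold gap; linarith
  have hx : 0 < x := hm.trans hxm
  have : (1 - m / x) • gap γ 0 + (m / x) • gap γ x <
      gap γ ((1 - m / x) • 0 + (m / x) • x) :=
    (gap_concave γ hγ).2 (Set.mem_Ici.2 le_rfl) (Set.mem_Ici.2 hx.le) hx.ne (by rw [sub_pos, div_lt_one hx]; exact hxm) (by positivity)
    (by ring)
  rw [h0] at this
  simp only [smul_eq_mul, mul_zero, zero_add, div_mul_cancel₀ m hx.ne'] at this
  rw [h1] at this
  have hp : 0 < m / x := by positivity
  by_contra hc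
  push Not at hc
  have := mul_nonneg hp.le hc
  linarith

lemma hasDerivAt_rate (γ x : ℝ) : HasDerivAt (rate γ) (γ * gap γ x) x := by
  have h1 : HasDerivAt (fun y : ℝ => γ * y) γ x := by
    simpa using (hasDerivAt_id x).const_mul γ
  have h2 := ((Real.hasDerivAt_cosh (γ * x)).comp x h1).log (Real.cosh_pos _).ne'
  have h3 := (((hasDerivAt_id x).pow 2).const_mul γ).div_const 2
  have h := h2.sub h3
  refine HasDerivAt.congr_deriv h ?_
  rw [gap, Real.tanh_eq_sinh_div_cosh]
  simp
  ring

lemma rate_even (γ x : ℝ) : rate γ |x| = rate γ x := by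
  rcases abs_choice x with h | h <;> rw [h]
  simp [rate]

lemma continuous_rate (γ : ℝ) : Continuous (rate γ) :=
  continuous_iff_continuousAt.2 (fun x => (hasDerivAt_rate γ x).continuousAt)

lemma rate_lt (γ : ℝ) (hγ : 0 < γ) (m : ℝ) (hm : 0 < m) (hfix : m = Real.tanh (γ * m))
    (x : ℝ) (hx : |x| ≠ m) : rate γ x < rate γ m := by
  rw [← rate_even γ x]
  rcases lt_or_gt_of_ne hx with h | h
  · have : StrictMonoOn (rate γ) (Set.Icc 0 m) := by
      apply strictMonoOn_of_deriv_pos (convex_Icc 0 m) (continuous_rate γ).continuousOn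
      intro y hy
      rw [interior_Icc] at hy
      rw [(hasDerivAt_rate γ y).deriv]
      exact mul_pos hγ (gap_pos γ hγ m hfix y hy.1 hy.2)
    exact this ⟨abs_nonneg x, h.le⟩ ⟨hm.le, le_rfl⟩ h
  · have : StrictAntiOn (rate γ) (Set.Ici m) := by
      apply strictAntiOn_of_deriv_neg (convex_Ici m) (continuous_rate γ).continuousOn
      intro y hy
      rw [interior_Ici] at hy
      rw [(hasDerivAt_rate γ y).deriv]
      exact mul_neg_of_pos_of_neg hγ (gap_neg γ hγ m hm hfix y hy)
    exact this (by simp) (by simpa using h.le) h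

lemma rate_gap (γ : ℝ) (hγ : 0 < γ) (m : ℝ) (hm : 0 < m) (hfix : m = Real.tanh (γ * m))
    (δ : ℝ) (hδ : 0 < δ) :
    ∃ c : ℝ, 0 < c ∧ ∀ a : ℝ, |a| ≤ 1 → δ ≤ |(|a| - m)| → rate γ a + c ≤ rate γ m := by
  set K : Set ℝ := Set.Icc (-1) 1 ∩ {a | δ ≤ |(|a| - m)|} with hK
  have hKc : IsCompact K := by
    apply isCompact_Icc.inter_right
    exact isClosed_le continuous_const (by fun_prop)
  rcases K.eq_empty_or_nonempty with he | hne
  · refine ⟨1, one_pos, fun a ha hd => ?_⟩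
    have : a ∈ K := ⟨abs_le.1 ha, hd⟩
    rw [he] at this
    exact this.elim
  · obtain ⟨a0, ha0, hmx⟩ := hKc.exists_isMaxOn hne (continuous_rate γ).continuousOn
    refine ⟨rate γ m - rate γ a0, ?_, fun a ha hd => ?_⟩
    · have := rate_lt γ hγ m hm hfix a0 (by
        intro h
        have h2 := ha0.2
        simp only [Set.mem_ofPred_eq, h, sub_self, abs_zero] at h2
        linarith)
      linarith
    · have := hmx (show a ∈ K from ⟨abs_le.1 ha, hd⟩)
      simp only [Set.mem_ofPred_eq] at this
      linarith

lemma sum_swap_le {n : ℕ} (s : Fin n → Bool) (i j : Fin n) :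
    ∑ l, |spinVal (s (Equiv.swap i j l)) - spinVal (s l)| ≤ 4 := by
  have h : ∀ l, |spinVal (s (Equiv.swap i j l)) - spinVal (s l)| ≤
      (if l = i then 2 else 0) + (if l = j then (2:ℝ) else 0) := by
    intro l
    have hb : ∀ b b' : Bool, |spinVal b - spinVal b'| ≤ 2 := by
      intro b b'
      cases b <;> cases b' <;> norm_num [spinVal]
    by_cases h1 : l = i
    · have := hb (s (Equiv.swap i j l)) (s l)
      simp only [h1, if_true]
      rw [h1] at this
      split_ifs <;> linarith
    · by_cases h2 : l = j
      · have := hb (s (Equiv.swap i j l)) (s l)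
        rw [if_neg h1, if_pos h2]
        linarith
      · rw [Equiv.swap_apply_of_ne_of_ne h1 h2]
        simp [h1, h2]
  refine (Finset.sum_le_sum (fun l _ => h l)).trans ?_
  rw [Finset.sum_add_distrib]
  simp
  norm_num

lemma xov_diff {n : ℕ} (ε : Fin n → Bool) (σ ρ : TwoConf n) :
    |xov ε σ - xov ε ρ| ≤ ∑ l, |spinVal (σ.1 l) - spinVal (ρ.1 l)| +
      ∑ l, |spinVal (σ.2 l) - spinVal (ρ.2 l)| := by
  unfold xov
  rw [← Finset.sum_sub_distrib, ← Finset.sum_add_distrib]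
  refine (Finset.abs_sum_le_sum_abs _ _).trans (Finset.sum_le_sum fun l _ => ?_)
  have e : (if ε l then (1 : ℝ) else 0) * (spinVal (σ.1 l) * spinVal (σ.2 l)) -
      (if ε l then (1 : ℝ) else 0) * (spinVal (ρ.1 l) * spinVal (ρ.2 l)) =
      (if ε l then (1 : ℝ) else 0) * ((spinVal (σ.1 l) - spinVal (ρ.1 l)) * spinVal (σ.2 l) +
        spinVal (ρ.1 l) * (spinVal (σ.2 l) - spinVal (ρ.2 l))) := by ring
  have h1 : |(spinVal (σ.1 l) - spinVal (ρ.1 l)) * spinVal (σ.2 l) +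
        spinVal (ρ.1 l) * (spinVal (σ.2 l) - spinVal (ρ.2 l))| ≤
        |spinVal (σ.1 l) - spinVal (ρ.1 l)| + |spinVal (σ.2 l) - spinVal (ρ.2 l)| := by
    refine (abs_add_le _ _).trans (le_of_eq ?_)
    rw [abs_mul, abs_mul, abs_spinVal, abs_spinVal, mul_one, one_mul]
  rw [e, abs_mul]
  refine le_trans ?_ h1
  apply mul_le_of_le_one_left (abs_nonneg _)
  split_ifs <;> simp

lemma abs_xov_le {n : ℕ} (ε : Fin n → Bool) (σ : TwoConf n) : |xov ε σ| ≤ n := by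
  unfold xov
  refine (Finset.abs_sum_le_sum_abs _ _).trans ?_
  have : ∀ i ∈ (Finset.univ : Finset (Fin n)),
      |(if ε i then (1 : ℝ) else 0) * (spinVal (σ.1 i) * spinVal (σ.2 i))| ≤ 1 := by
    intro i _
    rw [abs_mul, abs_mul, abs_spinVal, abs_spinVal]
    split_ifs <;> simp
  refine (Finset.sum_le_sum this).trans ?_
  simp

def swapEquiv {n : ℕ} (i j k : Fin n) : TwoConf n ≃ TwoConf n :=
  Equiv.prodCongr (Equiv.arrowCongr (Equiv.swap i j) (Equiv.refl Bool))
    (Equiv.arrowCongr (Equiv.swap i k) (Equiv.refl Bool))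

lemma swapEquiv_fst {n : ℕ} (i j k : Fin n) (σ : TwoConf n) (l : Fin n) :
    (swapEquiv i j k σ).1 l = σ.1 (Equiv.swap i j l) := by
  simp [swapEquiv, Equiv.arrowCongr]

lemma swapEquiv_snd {n : ℕ} (i j k : Fin n) (σ : TwoConf n) (l : Fin n) :
    (swapEquiv i j k σ).2 l = σ.2 (Equiv.swap i k l) := by
  simp [swapEquiv, Equiv.arrowCongr]

lemma sm_swap_fst {n : ℕ} (i j k : Fin n) (σ : TwoConf n) :
    sm (swapEquiv i j k σ).1 = sm σ.1 := by
  unfold sm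
  simp only [swapEquiv_fst]
  exact Equiv.sum_comp (Equiv.swap i j) (fun l => spinVal (σ.1 l))

lemma sm_swap_snd {n : ℕ} (i j k : Fin n) (σ : TwoConf n) :
    sm (swapEquiv i j k σ).2 = sm σ.2 := by
  unfold sm
  simp only [swapEquiv_snd]
  exact Equiv.sum_comp (Equiv.swap i k) (fun l => spinVal (σ.2 l))

lemma xov_swap {n : ℕ} (ε : Fin n → Bool) (i j k : Fin n) (σ : TwoConf n) :
    |xov ε (swapEquiv i j k σ) - xov ε σ| ≤ 8 := by
  refine (xov_diff ε _ _).trans ?_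
  simp only [swapEquiv_fst, swapEquiv_snd]
  linarith [sum_swap_le σ.1 i j, sum_swap_le σ.2 i k]

open Classical in
/-- Weight of the configuration with reversed coupling, restricted to the `++` sector. -/
def secV (n : ℕ) (α β c : ℝ) (ε : Fin n → Bool) (σ : TwoConf n) : ℝ :=
  if c * n ≤ sm σ.1 ∧ c * n ≤ sm σ.2 then
    cw n β σ.1 * cw n β σ.2 * Real.exp (-(α * xov ε σ)) else 0

lemma secV_nonneg (n : ℕ) (α β c : ℝ) (ε : Fin n → Bool) (σ : TwoConf n) :
    0 ≤ secV n α β c ε σ := by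
  unfold secV cw
  split_ifs <;> positivity

lemma secV_swap (n : ℕ) (α β c : ℝ) (hα : 0 ≤ α) (ε : Fin n → Bool) (i j k : Fin n)
    (σ : TwoConf n) :
    |secV n α β c ε (swapEquiv i j k σ) - secV n α β c ε σ| ≤
      (Real.exp (8 * α) - 1) * secV n α β c ε σ := by
  unfold secV cw
  rw [sm_swap_fst, sm_swap_snd]
  split_ifs with h
  · set u := Real.exp (β / (4 * n) * sm σ.1 ^ 2) * Real.exp (β / (4 * n) * sm σ.2 ^ 2)
    have hu : 0 < u := by positivity
    set d := xov ε (swapEquiv i j k σ) - xov ε σ with hd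
    have hd8 : |d| ≤ 8 := xov_swap ε i j k σ
    have e : -(α * xov ε (swapEquiv i j k σ)) = -(α * d) + -(α * xov ε σ) := by
      rw [hd]; ring
    rw [e, Real.exp_add]
    have hx := Real.exp_pos (-(α * xov ε σ))
    set v := Real.exp (-(α * xov ε σ))
    have e2 : u * (Real.exp (-(α * d)) * v) - u * v = (Real.exp (-(α * d)) - 1) * (u * v) := by
      ring
    rw [e2, abs_mul, abs_of_pos (mul_pos hu hx)]
    apply mul_le_mul_of_nonneg_right _ (mul_pos hu hx).le
    rw [abs_le] at hd8
    have h1 : Real.exp (-(α * d)) ≤ Real.exp (8 * α) := Real.exp_le_exp.2 (by nlinarith)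
    have h2 : Real.exp (-(8 * α)) ≤ Real.exp (-(α * d)) := Real.exp_le_exp.2 (by nlinarith)
    have h3 : 1 - Real.exp (-(8 * α)) ≤ Real.exp (8 * α) - 1 := by
      have := Real.add_one_le_exp (8 * α)
      have := Real.add_one_le_exp (-(8 * α))
      linarith
    rw [abs_le]
    constructor <;> linarith
  · simp

lemma secV_corr (n : ℕ) (α β c : ℝ) (hα : 0 ≤ α) (ε : Fin n → Bool) (i j k : Fin n) :
    ∑ σ : TwoConf n, secV n α β c ε σ * (spinVal (σ.1 j) * spinVal (σ.2 k)) -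
      (Real.exp (8 * α) - 1) * ∑ σ : TwoConf n, secV n α β c ε σ ≤
    ∑ σ : TwoConf n, secV n α β c ε σ * (spinVal (σ.1 i) * spinVal (σ.2 i)) := by
  rw [← Equiv.sum_comp (swapEquiv i j k)
    (fun σ : TwoConf n => secV n α β c ε σ * (spinVal (σ.1 j) * spinVal (σ.2 k)))]
  rw [Finset.mul_sum, ← Finset.sum_sub_distrib]
  apply Finset.sum_le_sum
  intro σ _
  simp only [swapEquiv_fst, swapEquiv_snd, Equiv.swap_apply_right]
  have h := secV_swap n α β c hα ε i j k σ
  have h2 : (secV n α β c ε (swapEquiv i j k σ) - secV n α β c ε σ) *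
      (spinVal (σ.1 i) * spinVal (σ.2 i)) ≤ (Real.exp (8 * α) - 1) * secV n α β c ε σ := by
    refine le_trans (le_abs_self _) ?_
    rw [abs_mul, abs_mul, abs_spinVal, abs_spinVal, mul_one, mul_one]
    exact h
  linarith

lemma secV_corr_lower (n : ℕ) (hn : 0 < n) (α β c : ℝ) (hα : 0 ≤ α) (hc : 0 < c)
    (ε : Fin n → Bool) (i : Fin n) :
    (c ^ 2 - (Real.exp (8 * α) - 1)) * ∑ σ : TwoConf n, secV n α β c ε σ ≤
    ∑ σ : TwoConf n, secV n α β c ε σ * (spinVal (σ.1 i) * spinVal (σ.2 i)) := by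
  have hn' : (0:ℝ) < n := by exact_mod_cast hn
  set R := ∑ σ : TwoConf n, secV n α β c ε σ * (spinVal (σ.1 i) * spinVal (σ.2 i))
  set A := ∑ σ : TwoConf n, secV n α β c ε σ
  have h1 : ∑ j : Fin n, ∑ k : Fin n,
      (∑ σ : TwoConf n, secV n α β c ε σ * (spinVal (σ.1 j) * spinVal (σ.2 k)) -
      (Real.exp (8 * α) - 1) * A) ≤ ∑ j : Fin n, ∑ k : Fin n, R :=
    Finset.sum_le_sum fun j _ => Finset.sum_le_sum fun k _ => secV_corr n α β c hα ε i j k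
  simp only [Finset.sum_sub_distrib, Finset.sum_const, Finset.card_univ, Fintype.card_fin,
    nsmul_eq_mul] at h1
  have h2 : ∑ j : Fin n, ∑ k : Fin n, ∑ σ : TwoConf n,
      secV n α β c ε σ * (spinVal (σ.1 j) * spinVal (σ.2 k)) =
      ∑ σ : TwoConf n, secV n α β c ε σ * (sm σ.1 * sm σ.2) := by
    have : ∀ j : Fin n, ∑ k : Fin n, ∑ σ : TwoConf n,
      secV n α β c ε σ * (spinVal (σ.1 j) * spinVal (σ.2 k)) =
      ∑ σ : TwoConf n, secV n α β c ε σ * (spinVal (σ.1 j) * sm σ.2) := by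
      intro j
      rw [Finset.sum_comm]
      simp only [sm, Finset.mul_sum]
    simp only [this]
    rw [Finset.sum_comm]
    refine Finset.sum_congr rfl fun σ _ => ?_
    rw [← Finset.mul_sum, ← Finset.sum_mul]
    rfl
  have h3 : (c * n) ^ 2 * A ≤ ∑ σ : TwoConf n, secV n α β c ε σ * (sm σ.1 * sm σ.2) := by
    rw [Finset.mul_sum]
    apply Finset.sum_le_sum
    intro σ _
    by_cases h : c * n ≤ sm σ.1 ∧ c * n ≤ sm σ.2
    · rw [mul_comm]
      apply mul_le_mul_of_nonneg_left _ (secV_nonneg _ _ _ _ _ _)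
      rw [sq]
      exact mul_le_mul h.1 h.2 (by positivity) ((by positivity : 0 ≤ c * n).trans h.1)
    · simp [secV, h]
  rw [h2] at h1
  have h4 : (n:ℝ) * n * ((c ^ 2 - (Real.exp (8 * α) - 1)) * A) ≤ n * n * R := by nlinarith
  exact le_of_mul_le_mul_left h4 (by positivity)

open Classical in
lemma sector_ratio (n : ℕ) (hn : 0 < n) (α β c : ℝ) (hα : 0 ≤ α) (hc : 0 < c)
    (hαc : Real.exp (8 * α) - 1 ≤ c ^ 2 / 2) (ε : Fin n → Bool) :
    (1 + α * epsK ε * c ^ 2) * ∑ σ : TwoConf n, secV n α β c ε σ ≤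
    ∑ σ : TwoConf n, cw n β σ.1 * cw n β σ.2 * Real.exp (α * xov ε σ) := by
  set A := ∑ σ : TwoConf n, secV n α β c ε σ with hA
  have hA0 : 0 ≤ A := Finset.sum_nonneg fun σ _ => secV_nonneg _ _ _ _ _ _
  have h1 : ∑ σ : TwoConf n, secV n α β c ε σ * (1 + 2 * α * xov ε σ) ≤
      ∑ σ : TwoConf n, cw n β σ.1 * cw n β σ.2 * Real.exp (α * xov ε σ) := by
    apply Finset.sum_le_sum
    intro σ _
    have hw : 0 < cw n β σ.1 * cw n β σ.2 := by unfold cw; positivity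
    unfold secV
    split_ifs with h
    · have e : α * xov ε σ = -(α * xov ε σ) + 2 * α * xov ε σ := by ring
      conv_rhs => rw [e, Real.exp_add]
      rw [← mul_assoc]
      apply mul_le_mul_of_nonneg_left
      · linarith [Real.add_one_le_exp (2 * α * xov ε σ)]
      · positivity
    · rw [zero_mul]; positivity
  refine le_trans ?_ h1
  have h2 : ∑ σ : TwoConf n, secV n α β c ε σ * (1 + 2 * α * xov ε σ) =
      A + 2 * α * ∑ i, (if ε i then (1:ℝ) else 0) *
        ∑ σ : TwoConf n, secV n α β c ε σ * (spinVal (σ.1 i) * spinVal (σ.2 i)) := by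
    simp only [mul_add, mul_one, Finset.sum_add_distrib]
    congr 1
    simp only [xov, Finset.mul_sum]
    rw [Finset.sum_comm]
    refine Finset.sum_congr rfl fun i _ => Finset.sum_congr rfl fun σ _ => ?_
    ring
  rw [h2]
  have h3 : epsK ε * (c ^ 2 / 2 * A) ≤ ∑ i, (if ε i then (1:ℝ) else 0) *
        ∑ σ : TwoConf n, secV n α β c ε σ * (spinVal (σ.1 i) * spinVal (σ.2 i)) := by
    rw [epsK, Finset.sum_mul]
    apply Finset.sum_le_sum
    intro i _
    apply mul_le_mul_of_nonneg_left
    · refine le_trans ?_ (secV_corr_lower n hn α β c hα hc ε i)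
      apply mul_le_mul_of_nonneg_right _ hA0
      linarith
    · split_ifs <;> simp
  have h4 := mul_le_mul_of_nonneg_left h3 (by positivity : 0 ≤ 2 * α)
  linarith

def gw (n : ℕ) (α β : ℝ) (ε : Fin n → Bool) (σ : TwoConf n) : ℝ :=
  cw n β σ.1 * cw n β σ.2 * Real.exp (α * xov ε σ)

lemma cw_pos (n : ℕ) (β : ℝ) (s : Fin n → Bool) : 0 < cw n β s := Real.exp_pos _

lemma gw_pos (n : ℕ) (α β : ℝ) (ε : Fin n → Bool) (σ : TwoConf n) : 0 < gw n α β ε σ :=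
  mul_pos (mul_pos (cw_pos _ _ _) (cw_pos _ _ _)) (Real.exp_pos _)

lemma gw_sum_pos (n : ℕ) (α β : ℝ) (ε : Fin n → Bool) : 0 < ∑ σ : TwoConf n, gw n α β ε σ :=
  Finset.sum_pos (fun σ _ => gw_pos n α β ε σ) ⟨(fun _ => true, fun _ => true), Finset.mem_univ _⟩

lemma integral_dil (n : ℕ) (α β : ℝ) (ε : Fin n → Bool)
    (f : BoundedContinuousFunction (ℝ × ℝ) ℝ) :
    ∫ x, f x ∂(dilMagDist n α β ε) =
      (∑ σ : TwoConf n, gw n α β ε σ * f (mag1 n σ, mag2 n σ)) / ∑ σ : TwoConf n, gw n α β ε σ := by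
  unfold dilMagDist
  simp only [exp_neg_dilH]
  change ∫ x, f x ∂((∑ σ : TwoConf n, ENNReal.ofReal (gw n α β ε σ))⁻¹ •
    ∑ σ : TwoConf n, ENNReal.ofReal (gw n α β ε σ) • Measure.dirac (mag1 n σ, mag2 n σ)) = _
  rw [integral_smul_measure, integral_finsetSum_measure]
  · simp only [integral_smul_measure, integral_dirac]
    rw [← ENNReal.ofReal_sum_of_nonneg (fun σ _ => (gw_pos n α β ε σ).le), ENNReal.toReal_inv,
      ENNReal.toReal_ofReal (gw_sum_pos n α β ε).le, smul_eq_mul, div_eq_inv_mul]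
    congr 1
    refine Finset.sum_congr rfl fun σ _ => ?_
    rw [ENNReal.toReal_ofReal (gw_pos n α β ε σ).le, smul_eq_mul]
  · intro σ _
    apply Integrable.smul_measure _ ENNReal.ofReal_ne_top
    exact f.integrable _

lemma integral_target (m : ℝ) (f : BoundedContinuousFunction (ℝ × ℝ) ℝ) :
    ∫ x, f x ∂((2 : ENNReal)⁻¹ •
      (Measure.dirac ((m, m) : ℝ × ℝ) + Measure.dirac ((-m, -m) : ℝ × ℝ))) =
      (f (m, m) + f (-m, -m)) / 2 := by
  rw [integral_smul_measure, integral_add_measure (f.integrable _) (f.integrable _),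
    integral_dirac, integral_dirac]
  simp
  ring

def flip1 (n : ℕ) : TwoConf n ≃ TwoConf n :=
  Equiv.prodCongr (Equiv.arrowCongr (Equiv.refl _) Equiv.boolNot) (Equiv.refl _)

def flip2 (n : ℕ) : TwoConf n ≃ TwoConf n :=
  Equiv.prodCongr (Equiv.refl _) (Equiv.arrowCongr (Equiv.refl _) Equiv.boolNot)

lemma sm_flip1 (n : ℕ) (σ : TwoConf n) : sm (flip1 n σ).1 = - sm σ.1 ∧ sm (flip1 n σ).2 = sm σ.2 := by
  simp [flip1, sm, Equiv.arrowCongr, spinVal_not]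

lemma sm_flip2 (n : ℕ) (σ : TwoConf n) : sm (flip2 n σ).1 = sm σ.1 ∧ sm (flip2 n σ).2 = - sm σ.2 := by
  simp [flip2, sm, Equiv.arrowCongr, spinVal_not]

lemma xov_flip1 (n : ℕ) (ε : Fin n → Bool) (σ : TwoConf n) : xov ε (flip1 n σ) = - xov ε σ := by
  simp [flip1, xov, Equiv.arrowCongr, spinVal_not]

lemma xov_flip2 (n : ℕ) (ε : Fin n → Bool) (σ : TwoConf n) : xov ε (flip2 n σ) = - xov ε σ := by
  simp [flip2, xov, Equiv.arrowCongr, spinVal_not]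

lemma gw_flip (n : ℕ) (α β : ℝ) (ε : Fin n → Bool) (σ : TwoConf n) :
    gw n α β ε (flip1 n (flip2 n σ)) = gw n α β ε σ := by
  simp [gw, cw, xov_flip1, xov_flip2, sm_flip1, sm_flip2]

open Classical in
lemma opp2_bound (n : ℕ) (hn : 0 < n) (α β c : ℝ) (hα : 0 ≤ α) (hc : 0 < c)
    (hαc : Real.exp (8 * α) - 1 ≤ c ^ 2 / 2) (ε : Fin n → Bool) :
    (1 + α * epsK ε * c ^ 2) * ∑ σ : TwoConf n,
      (if c * n ≤ sm σ.1 ∧ c * n ≤ - sm σ.2 then gw n α β ε σ else 0) ≤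
    ∑ σ : TwoConf n, gw n α β ε σ := by
  refine le_trans (le_of_eq ?_) (sector_ratio n hn α β c hα hc hαc ε)
  congr 1
  rw [← Equiv.sum_comp (flip2 n) (fun σ => secV n α β c ε σ)]
  refine Finset.sum_congr rfl fun σ _ => ?_
  simp [secV, gw, cw, xov_flip2, sm_flip2]

open Classical in
lemma opp1_bound (n : ℕ) (hn : 0 < n) (α β c : ℝ) (hα : 0 ≤ α) (hc : 0 < c)
    (hαc : Real.exp (8 * α) - 1 ≤ c ^ 2 / 2) (ε : Fin n → Bool) :
    (1 + α * epsK ε * c ^ 2) * ∑ σ : TwoConf n,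
      (if c * n ≤ - sm σ.1 ∧ c * n ≤ sm σ.2 then gw n α β ε σ else 0) ≤
    ∑ σ : TwoConf n, gw n α β ε σ := by
  refine le_trans (le_of_eq ?_) (sector_ratio n hn α β c hα hc hαc ε)
  congr 1
  rw [← Equiv.sum_comp (flip1 n) (fun σ => secV n α β c ε σ)]
  refine Finset.sum_congr rfl fun σ _ => ?_
  simp [secV, gw, cw, xov_flip1, sm_flip1]

lemma gw_le (n : ℕ) (α β : ℝ) (hα : 0 ≤ α) (ε : Fin n → Bool) (σ : TwoConf n) :
    gw n α β ε σ ≤ Real.exp (α * n) * (cw n β σ.1 * cw n β σ.2) := by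
  unfold gw
  rw [mul_comm]
  apply mul_le_mul_of_nonneg_right _ (mul_pos (cw_pos _ _ _) (cw_pos _ _ _)).le
  apply Real.exp_le_exp.2
  exact mul_le_mul_of_nonneg_left (abs_le.1 (abs_xov_le ε σ)).2 hα

lemma le_gw (n : ℕ) (α β : ℝ) (hα : 0 ≤ α) (ε : Fin n → Bool) (σ : TwoConf n) :
    Real.exp (-(α * n)) * (cw n β σ.1 * cw n β σ.2) ≤ gw n α β ε σ := by
  unfold gw
  rw [mul_comm]
  apply mul_le_mul_of_nonneg_left _ (mul_pos (cw_pos _ _ _) (cw_pos _ _ _)).le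
  apply Real.exp_le_exp.2
  have := mul_le_mul_of_nonneg_left (abs_le.1 (abs_xov_le ε σ)).1 hα
  linarith

lemma gw_sum_lower (n : ℕ) (α β : ℝ) (hα : 0 ≤ α) (ε : Fin n → Bool) :
    (∑ s : Fin n → Bool, cw n β s) * (∑ s : Fin n → Bool, cw n β s) ≤
      Real.exp (α * n) * ∑ σ : TwoConf n, gw n α β ε σ := by
  have h : Real.exp (-(α * n)) * ((∑ s : Fin n → Bool, cw n β s) * (∑ s : Fin n → Bool, cw n β s)) ≤
      ∑ σ : TwoConf n, gw n α β ε σ := by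
    rw [Finset.sum_mul_sum, ← Fintype.sum_prod_type', Finset.mul_sum]
    exact Finset.sum_le_sum fun σ _ => le_gw n α β hα ε σ
  have h2 := mul_le_mul_of_nonneg_left h (Real.exp_pos (α * n)).le
  rwa [← mul_assoc, ← Real.exp_add, add_neg_cancel, Real.exp_zero, one_mul] at h2

lemma bad_aux (A C Z q e : ℝ) (hC : 0 ≤ C) (he : 0 < e) (hq : 0 ≤ q)
    (h1 : A ≤ q * C) (h2 : C * C ≤ e * Z) : e * (A * C) ≤ e * e * q * Z := by
  have h3 : A * C ≤ q * C * C := mul_le_mul_of_nonneg_right h1 hC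
  have h4 : q * (C * C) ≤ q * (e * Z) := mul_le_mul_of_nonneg_left h2 hq
  have h5 : A * C ≤ q * (e * Z) := by linarith
  have := mul_le_mul_of_nonneg_left h5 he.le
  linarith

open Classical in
lemma bad1_bound (n : ℕ) (hn : 0 < n) (α β m δ c : ℝ) (hα : 0 ≤ α) (hβ : 0 < β)
    (hc : ∀ a : ℝ, |a| ≤ 1 → δ ≤ |(|a| - m)| → rate (β / 2) a + c ≤ rate (β / 2) m)
    (ε : Fin n → Bool) :
    ∑ σ : TwoConf n, (if δ ≤ |(|sm σ.1 / n| - m)| then gw n α β ε σ else 0) ≤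
      Real.exp (α * n) * Real.exp (α * n) * ((2 * n + 1) * Real.exp (-(c * n))) *
        ∑ σ : TwoConf n, gw n α β ε σ := by
  refine le_trans ?_ (bad_aux _ (∑ s : Fin n → Bool, cw n β s) _ _ _
    (Finset.sum_nonneg fun s _ => (cw_pos _ _ _).le) (Real.exp_pos _) (by positivity)
    (cw_ldp n hn β m δ c hβ hc) (gw_sum_lower n α β hα ε))
  rw [Finset.sum_mul_sum, ← Fintype.sum_prod_type', Finset.mul_sum]
  refine Finset.sum_le_sum fun σ _ => ?_
  split_ifs with h
  · exact gw_le n α β hα ε σ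
  · simp

open Classical in
lemma bad2_bound (n : ℕ) (hn : 0 < n) (α β m δ c : ℝ) (hα : 0 ≤ α) (hβ : 0 < β)
    (hc : ∀ a : ℝ, |a| ≤ 1 → δ ≤ |(|a| - m)| → rate (β / 2) a + c ≤ rate (β / 2) m)
    (ε : Fin n → Bool) :
    ∑ σ : TwoConf n, (if δ ≤ |(|sm σ.2 / n| - m)| then gw n α β ε σ else 0) ≤
      Real.exp (α * n) * Real.exp (α * n) * ((2 * n + 1) * Real.exp (-(c * n))) *
        ∑ σ : TwoConf n, gw n α β ε σ := by
  refine le_trans ?_ (bad_aux _ (∑ s : Fin n → Bool, cw n β s) _ _ _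
    (Finset.sum_nonneg fun s _ => (cw_pos _ _ _).le) (Real.exp_pos _) (by positivity)
    (cw_ldp n hn β m δ c hβ hc) (gw_sum_lower n α β hα ε))
  rw [mul_comm (∑ s : Fin n → Bool, _), Finset.sum_mul_sum, ← Fintype.sum_prod_type',
    Finset.mul_sum]
  refine Finset.sum_le_sum fun σ _ => ?_
  split_ifs with h
  · exact gw_le n α β hα ε σ
  · simp

lemma pair_near (f : BoundedContinuousFunction (ℝ × ℝ) ℝ) (m δ η a b : ℝ)
    (h1 : ∀ x y : ℝ, |x - m| < δ → |y - m| < δ → |f (x, y) - f (m, m)| ≤ η)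
    (h2 : ∀ x y : ℝ, |x + m| < δ → |y + m| < δ → |f (x, y) - f (-m, -m)| ≤ η)
    (ha : |a - m| < δ) (hb : |b - m| < δ) :
    |(f (a, b) + f (-a, -b)) / 2 - (f (m, m) + f (-m, -m)) / 2| ≤ η := by
  have i1 := h1 a b ha hb
  have i2 := h2 (-a) (-b) (by rw [abs_sub_comm] at ha; rwa [neg_add_eq_sub])
    (by rw [abs_sub_comm] at hb; rwa [neg_add_eq_sub])
  rw [abs_le] at *
  constructor <;> linarith

open Classical in
lemma pointwise (n : ℕ) (hn : 0 < n) (f : BoundedContinuousFunction (ℝ × ℝ) ℝ)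
    (m δ η : ℝ) (hη : 0 ≤ η) (hδ : δ ≤ m / 2)
    (h1 : ∀ x y : ℝ, |x - m| < δ → |y - m| < δ → |f (x, y) - f (m, m)| ≤ η)
    (h2 : ∀ x y : ℝ, |x + m| < δ → |y + m| < δ → |f (x, y) - f (-m, -m)| ≤ η) (s t : ℝ) :
    |(f (s / n, t / n) + f (-(s / n), -(t / n))) / 2 - (f (m, m) + f (-m, -m)) / 2| ≤
      η + 2 * ‖f‖ * ((if δ ≤ |(|s / n| - m)| then 1 else 0) +
        (if δ ≤ |(|t / n| - m)| then 1 else 0) +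
        (if m / 2 * n ≤ -s ∧ m / 2 * n ≤ t then 1 else 0) +
        (if m / 2 * n ≤ s ∧ m / 2 * n ≤ -t then 1 else 0)) := by
  have hn' : (0:ℝ) < n := by exact_mod_cast hn
  have hf : ∀ x, |f x| ≤ ‖f‖ := fun x => f.norm_coe_le_norm x
  have hf0 : 0 ≤ ‖f‖ := norm_nonneg f
  have triv : |(f (s / n, t / n) + f (-(s / n), -(t / n))) / 2 - (f (m, m) + f (-m, -m)) / 2| ≤
      2 * ‖f‖ := by
    have i1 := abs_le.1 (hf (s / n, t / n))
    have i2 := abs_le.1 (hf (-(s / n), -(t / n)))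
    have i3 := abs_le.1 (hf (m, m))
    have i4 := abs_le.1 (hf (-m, -m))
    rw [abs_le]
    constructor <;> linarith
  have key : ∀ r : ℝ, 0 ≤ r → 
      (1 ≤ r ∨ |(f (s / n, t / n) + f (-(s / n), -(t / n))) / 2 -
        (f (m, m) + f (-m, -m)) / 2| ≤ η) →
      |(f (s / n, t / n) + f (-(s / n), -(t / n))) / 2 - (f (m, m) + f (-m, -m)) / 2| ≤
        η + 2 * ‖f‖ * r := by
    intro r hr h
    rcases h with h | h
    · nlinarith
    · have : 0 ≤ 2 * ‖f‖ * r := by positivity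
      linarith
  have nn : ∀ (P : Prop) [Decidable P], (0:ℝ) ≤ if P then 1 else 0 := by
    intro P _
    split_ifs <;> norm_num
  apply key
  · have := nn (δ ≤ |(|s / n| - m)|)
    have := nn (δ ≤ |(|t / n| - m)|)
    have := nn (m / 2 * n ≤ -s ∧ m / 2 * n ≤ t)
    have := nn (m / 2 * n ≤ s ∧ m / 2 * n ≤ -t)
    linarith
  by_cases hb1 : δ ≤ |(|s / n| - m)|
  · left
    rw [if_pos hb1]
    have := nn (δ ≤ |(|t / n| - m)|)
    have := nn (m / 2 * n ≤ -s ∧ m / 2 * n ≤ t)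
    have := nn (m / 2 * n ≤ s ∧ m / 2 * n ≤ -t)
    linarith
  by_cases hb2 : δ ≤ |(|t / n| - m)|
  · left
    rw [if_pos hb2]
    have := nn (δ ≤ |(|s / n| - m)|)
    have := nn (m / 2 * n ≤ -s ∧ m / 2 * n ≤ t)
    have := nn (m / 2 * n ≤ s ∧ m / 2 * n ≤ -t)
    linarith
  rw [if_neg hb1, if_neg hb2]
  push Not at hb1 hb2
  have hs : s = s / n * n := by field_simp
  have ht : t = t / n * n := by field_simp
  generalize s / (n:ℝ) = a at *
  generalize t / (n:ℝ) = b at *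
  have g1 := abs_lt.1 hb1
  have g2 := abs_lt.1 hb2
  rcases le_total 0 a with ha | ha <;> rcases le_total 0 b with hb | hb
  · right
    rw [abs_of_nonneg ha] at hb1
    rw [abs_of_nonneg hb] at hb2
    exact pair_near f m δ η a b h1 h2 hb1 hb2
  · left
    rw [abs_of_nonneg ha] at g1
    rw [abs_of_nonpos hb] at g2
    have := nn (m / 2 * n ≤ -s ∧ m / 2 * n ≤ t)
    rw [if_pos (show m / 2 * n ≤ s ∧ m / 2 * n ≤ -t by
      constructor
      · rw [hs]; exact mul_le_mul_of_nonneg_right (by linarith) hn'.le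
      · rw [ht, ← neg_mul]; exact mul_le_mul_of_nonneg_right (by linarith) hn'.le)]
    linarith
  · left
    rw [abs_of_nonpos ha] at g1
    rw [abs_of_nonneg hb] at g2
    have := nn (m / 2 * n ≤ s ∧ m / 2 * n ≤ -t)
    rw [if_pos (show m / 2 * n ≤ -s ∧ m / 2 * n ≤ t by
      constructor
      · rw [hs, ← neg_mul]; exact mul_le_mul_of_nonneg_right (by linarith) hn'.le
      · rw [ht]; exact mul_le_mul_of_nonneg_right (by linarith) hn'.le)]
    linarith
  · right
    rw [abs_of_nonpos ha] at hb1
    rw [abs_of_nonpos hb] at hb2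
    have := pair_near f m δ η (-a) (-b) h1 h2 hb1 hb2
    rw [neg_neg, neg_neg] at this
    rwa [add_comm (f (a, b))]

lemma det_bound (n : ℕ) (hn : 0 < n) (f : BoundedContinuousFunction (ℝ × ℝ) ℝ)
    (α β m δ η c : ℝ) (hα : 0 ≤ α) (hβ : 0 < β) (hm : 0 < m) (hη : 0 ≤ η) (hδ : δ ≤ m / 2)
    (h1 : ∀ x y : ℝ, |x - m| < δ → |y - m| < δ → |f (x, y) - f (m, m)| ≤ η)
    (h2 : ∀ x y : ℝ, |x + m| < δ → |y + m| < δ → |f (x, y) - f (-m, -m)| ≤ η)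
    (hc : ∀ a : ℝ, |a| ≤ 1 → δ ≤ |(|a| - m)| → rate (β / 2) a + c ≤ rate (β / 2) m)
    (hαc : Real.exp (8 * α) - 1 ≤ (m / 2) ^ 2 / 2) (ε : Fin n → Bool) (κ : ℝ) (hκ : 0 ≤ κ)
    (hK : κ ≤ α * epsK ε) :
    |(∫ x, f x ∂(dilMagDist n α β ε)) - ∫ x, f x ∂((2 : ENNReal)⁻¹ •
      (Measure.dirac ((m, m) : ℝ × ℝ) + Measure.dirac ((-m, -m) : ℝ × ℝ)))| ≤
    η + 4 * ‖f‖ * (Real.exp (α * n) * Real.exp (α * n) * ((2 * n + 1) * Real.exp (-(c * n))) +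
      1 / (1 + κ * (m / 2) ^ 2)) := by
  classical
  rw [integral_dil, integral_target]
  set Z := ∑ σ : TwoConf n, gw n α β ε σ with hZ
  have hZ0 : 0 < Z := gw_sum_pos n α β ε
  set T := (f (m, m) + f (-m, -m)) / 2 with hT
  set Q := Real.exp (α * n) * Real.exp (α * n) * ((2 * n + 1) * Real.exp (-(c * n))) with hQ
  have hsym : ∑ σ : TwoConf n, gw n α β ε σ * f (mag1 n σ, mag2 n σ) =
      ∑ σ : TwoConf n, gw n α β ε σ * f (-mag1 n σ, -mag2 n σ) := by
    rw [← Equiv.sum_comp ((flip2 n).trans (flip1 n))]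
    refine Finset.sum_congr rfl fun σ _ => ?_
    rw [Equiv.trans_apply, gw_flip, mag1_eq, mag2_eq, mag1_eq, mag2_eq, (sm_flip1 n _).1,
      (sm_flip1 n _).2, (sm_flip2 n _).1, (sm_flip2 n _).2, neg_div, neg_div]
  have heq : (∑ σ : TwoConf n, gw n α β ε σ * f (mag1 n σ, mag2 n σ)) - T * Z =
      ∑ σ : TwoConf n, gw n α β ε σ *
        ((f (mag1 n σ, mag2 n σ) + f (-mag1 n σ, -mag2 n σ)) / 2 - T) := by
    have : ∀ σ : TwoConf n, gw n α β ε σ *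
        ((f (mag1 n σ, mag2 n σ) + f (-mag1 n σ, -mag2 n σ)) / 2 - T) =
        (gw n α β ε σ * f (mag1 n σ, mag2 n σ)) / 2 +
        (gw n α β ε σ * f (-mag1 n σ, -mag2 n σ)) / 2 - T * gw n α β ε σ := by
      intro σ; ring
    simp only [this, Finset.sum_sub_distrib, Finset.sum_add_distrib, ← Finset.sum_div,
      ← Finset.mul_sum]
    rw [← hsym]
    ring
  have hd : (∑ σ : TwoConf n, gw n α β ε σ * f (mag1 n σ, mag2 n σ)) / Z - T =
      ((∑ σ : TwoConf n, gw n α β ε σ * f (mag1 n σ, mag2 n σ)) - T * Z) / Z := by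
    field_simp
  rw [hd, heq, abs_div, abs_of_pos hZ0, div_le_iff₀ hZ0]
  refine (Finset.abs_sum_le_sum_abs _ _).trans ?_
  have hpt : ∀ σ ∈ (Finset.univ : Finset (TwoConf n)), |gw n α β ε σ *
        ((f (mag1 n σ, mag2 n σ) + f (-mag1 n σ, -mag2 n σ)) / 2 - T)| ≤
      η * gw n α β ε σ + 2 * ‖f‖ * (
        (if δ ≤ |(|sm σ.1 / n| - m)| then gw n α β ε σ else 0) +
        (if δ ≤ |(|sm σ.2 / n| - m)| then gw n α β ε σ else 0) +
        (if m / 2 * n ≤ - sm σ.1 ∧ m / 2 * n ≤ sm σ.2 then gw n α β ε σ else 0) +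
        (if m / 2 * n ≤ sm σ.1 ∧ m / 2 * n ≤ - sm σ.2 then gw n α β ε σ else 0)) := by
    intro σ _
    rw [abs_mul, abs_of_pos (gw_pos n α β ε σ), mag1_eq, mag2_eq]
    refine (mul_le_mul_of_nonneg_left (pointwise n hn f m δ η hη hδ h1 h2 (sm σ.1) (sm σ.2))
      (gw_pos n α β ε σ).le).trans (le_of_eq ?_)
    have ite_eq : ∀ (P : Prop) [Decidable P], (if P then gw n α β ε σ else 0) =
        gw n α β ε σ * if P then 1 else 0 := by
      intro P _
      split_ifs <;> simp
    rw [ite_eq, ite_eq, ite_eq, ite_eq]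
    ring
  refine (Finset.sum_le_sum hpt).trans ?_
  rw [Finset.sum_add_distrib, ← Finset.mul_sum, ← Finset.mul_sum, Finset.sum_add_distrib,
    Finset.sum_add_distrib, Finset.sum_add_distrib]
  have b1 := bad1_bound n hn α β m δ c hα hβ hc ε
  have b2 := bad2_bound n hn α β m δ c hα hβ hc ε
  have o1 := opp1_bound n hn α β (m / 2) hα (by positivity) hαc ε
  have o2 := opp2_bound n hn α β (m / 2) hα (by positivity) hαc ε
  rw [← hZ] at b1 b2 o1 o2
  rw [← hQ] at b1 b2
  have conv : ∀ u : ℝ, 0 ≤ u → (1 + α * epsK ε * (m / 2) ^ 2) * u ≤ Z →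
      u ≤ 1 / (1 + κ * (m / 2) ^ 2) * Z := by
    intro u hu h
    have hpos : 0 < 1 + κ * (m / 2) ^ 2 := by positivity
    rw [one_div_mul_eq_div, le_div_iff₀ hpos]
    have : κ * (m / 2) ^ 2 ≤ α * epsK ε * (m / 2) ^ 2 :=
      mul_le_mul_of_nonneg_right hK (by positivity)
    nlinarith
  have nn : ∀ (P : TwoConf n → Prop) [DecidablePred P],
      0 ≤ ∑ σ : TwoConf n, if P σ then gw n α β ε σ else 0 := by
    intro P _
    apply Finset.sum_nonneg
    intro σ _
    split_ifs
    · exact (gw_pos n α β ε σ).le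
    · exact le_rfl
  have o1' := conv _ (nn _) o1
  have o2' := conv _ (nn _) o2
  have hall := add_le_add (add_le_add (add_le_add b1 b2) o1') o2'
  have := mul_le_mul_of_nonneg_left hall (by positivity : 0 ≤ 2 * ‖f‖)
  linarith

lemma bern_mono (n : ℕ) (q : ℝ) (hq : q ∈ Set.Ioc (0:ℝ) 1) (A B : Set (Fin n → Bool)) (h : A ⊆ B) :
    bernProb n q A ≤ bernProb n q B := by
  unfold bernProb
  apply Finset.sum_le_sum
  intro ε _
  apply Set.indicator_le_indicator_of_subset h
  intro ε
  apply Finset.prod_nonneg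
  intro i _
  split_ifs
  · exact hq.1.le
  · linarith [hq.2]

lemma bern_nonneg (n : ℕ) (q : ℝ) (hq : q ∈ Set.Ioc (0:ℝ) 1) (A : Set (Fin n → Bool)) :
    0 ≤ bernProb n q A := by
  have := bern_mono n q hq ∅ A (Set.empty_subset _)
  simpa [bernProb] using this

lemma bern_tail (n : ℕ) (q : ℝ) (hq : q ∈ Set.Ioc (0:ℝ) 1) :
    bernProb n q {ε | epsK ε < q * n / 4} ≤ Real.exp (-(q * n / 4)) := by
  have h1 : bernProb n q {ε | epsK ε < q * n / 4} ≤
      ∑ ε : Fin n → Bool, Real.exp (q * n / 4) *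
        ∏ i, (if ε i then q * Real.exp (-1) else 1 - q) := by
    unfold bernProb
    apply Finset.sum_le_sum
    intro ε _
    have hprod : ∏ i, (if ε i then q * Real.exp (-1) else 1 - q) =
        (∏ i, if ε i then q else 1 - q) * Real.exp (-epsK ε) := by
      rw [epsK, ← Finset.sum_neg_distrib, Real.exp_sum, ← Finset.prod_mul_distrib]
      refine Finset.prod_congr rfl fun i _ => ?_
      split_ifs <;> simp
    have hnn : 0 ≤ ∏ i, if ε i then q else 1 - q := by
      apply Finset.prod_nonneg
      intro i _
      split_ifs
      · exact hq.1.le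
      · linarith [hq.2]
    rw [hprod]
    by_cases h : ε ∈ {ε : Fin n → Bool | epsK ε < q * n / 4}
    · rw [Set.indicator_of_mem h]
      have h' : epsK ε < q * n / 4 := h
      rw [mul_left_comm, ← Real.exp_add]
      apply le_mul_of_one_le_right hnn
      apply Real.one_le_exp
      linarith
    · rw [Set.indicator_of_notMem h]
      positivity
  refine h1.trans ?_
  rw [← Finset.mul_sum, sum_prod_bool n (fun _ b => if b then q * Real.exp (-1) else 1 - q)]
  simp only [if_true, Finset.prod_const, Finset.card_univ, Fintype.card_fin, Bool.false_eq_true,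
    if_false]
  have he : Real.exp (-1) ≤ 1 / 2 := by
    have := Real.exp_one_gt_d9
    rw [Real.exp_neg, one_div]
    apply inv_anti₀ (by norm_num)
    linarith
  have hle : q * Real.exp (-1) + (1 - q) ≤ Real.exp (-(q / 2)) := by
    have := Real.add_one_le_exp (-(q / 2))
    nlinarith [hq.1]
  have hnn : 0 ≤ q * Real.exp (-1) + (1 - q) := by
    have := mul_pos hq.1 (Real.exp_pos (-1))
    linarith [hq.2]
  have hp := pow_le_pow_left₀ hnn hle n
  rw [← Real.exp_nat_mul] at hp
  refine (mul_le_mul_of_nonneg_left hp (Real.exp_pos _).le).trans ?_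
  rw [← Real.exp_add]
  apply Real.exp_le_exp.2
  linarith

lemma near_point (f : BoundedContinuousFunction (ℝ × ℝ) ℝ) (a η : ℝ) (hη : 0 < η) :
    ∃ δ : ℝ, 0 < δ ∧ ∀ x y : ℝ, |x - a| < δ → |y - a| < δ → |f (x, y) - f (a, a)| ≤ η := by
  obtain ⟨δ, hδ, h⟩ := Metric.continuousAt_iff.1 (f.continuous.continuousAt (x := (a, a))) η hη
  refine ⟨δ, hδ, fun x y hx hy => ?_⟩
  have := @h (x, y) (by
    rw [Prod.dist_eq, Real.dist_eq, Real.dist_eq]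
    exact max_lt hx hy)
  rw [Real.dist_eq] at this
  exact this.le

lemma exp_term_tendsto (c : ℝ) (hc : 0 < c) :
    Tendsto (fun n : ℕ => (2 * (n:ℝ) + 1) * Real.exp (-(c * n))) atTop (nhds 0) := by
  have h1 : Tendsto (fun x : ℝ => x ^ 1 * Real.exp (-c * x)) atTop (nhds 0) := by
    simpa using tendsto_rpow_mul_exp_neg_mul_atTop_nhds_zero 1 c hc
  have h2 : Tendsto (fun x : ℝ => x ^ 0 * Real.exp (-c * x)) atTop (nhds 0) := by
    simpa using tendsto_rpow_mul_exp_neg_mul_atTop_nhds_zero 0 c hc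
  have h := ((h1.const_mul 2).add h2).comp (tendsto_natCast_atTop_atTop (R := ℝ))
  simp only [mul_zero, add_zero] at h
  refine h.congr fun n => ?_
  simp only [Function.comp, pow_one, pow_zero, neg_mul]
  ring

/-- Theorem 2(1): if `β > 2`, `α_N ↓ 0`, `N p(N) → ∞` and `p(N) N α_N → ∞`, then the
distribution of `m^N` under `μ^ε_{N,α_N,β}` converges in distribution in probability to
`(1/2)(δ_{(m⁺(β/2), m⁺(β/2))} + δ_{(m⁻(β/2), m⁻(β/2))})`. -/
theorem diluted_aligned_limit_in_probability (β : ℝ) (hβ : 2 < β) (mp : ℝ)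
    (hfix : mp = Real.tanh (β / 2 * mp))
    (hmax : ∀ z : ℝ, z = Real.tanh (β / 2 * z) → z ≤ mp)
    (α : ℕ → ℝ) (hαpos : ∀ N, 0 < α N)
    (hα0 : Tendsto α atTop (nhds 0))
    (p : ℕ → ℝ) (hp : ∀ N, p N ∈ Set.Ioc (0 : ℝ) 1)
    (hNp : Tendsto (fun N : ℕ => (N : ℝ) * p N) atTop atTop)
    (hpNα : Tendsto (fun N : ℕ => p N * N * α N) atTop atTop)
    (f : BoundedContinuousFunction (ℝ × ℝ) ℝ) (η : ℝ) (hη : 0 < η) :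
    Tendsto (fun n : ℕ =>
        bernProb n (p (2 * n))
          {ε : Fin n → Bool |
            η < |(∫ x, f x ∂(dilMagDist n (α (2 * n)) β ε)) -
              ∫ x, f x ∂((2 : ENNReal)⁻¹ •
                (Measure.dirac ((mp, mp) : ℝ × ℝ) + Measure.dirac ((-mp, -mp) : ℝ × ℝ)))|})
      atTop (nhds 0) := by
  have hγ : 1 < β / 2 := by linarith
  have hm : 0 < mp := mp_pos (β / 2) hγ mp hmax
  obtain ⟨δ1, hδ1, hn1⟩ := near_point f mp (η / 2) (by positivity)
  obtain ⟨δ2, hδ2, hn2⟩ := near_point f (-mp) (η / 2) (by positivity)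
  set δ := min (min δ1 δ2) (mp / 2) with hδdef
  have hδ : 0 < δ := lt_min (lt_min hδ1 hδ2) (by positivity)
  have hδa : δ ≤ δ1 := (min_le_left _ _).trans (min_le_left _ _)
  have hδb : δ ≤ δ2 := (min_le_left _ _).trans (min_le_right _ _)
  have hδc : δ ≤ mp / 2 := min_le_right _ _
  have h1 : ∀ x y : ℝ, |x - mp| < δ → |y - mp| < δ → |f (x, y) - f (mp, mp)| ≤ η / 2 :=
    fun x y hx hy => hn1 x y (hx.trans_le hδa) (hy.trans_le hδa)
  have h2 : ∀ x y : ℝ, |x + mp| < δ → |y + mp| < δ → |f (x, y) - f (-mp, -mp)| ≤ η / 2 :=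
    fun x y hx hy => hn2 x y (by rw [sub_neg_eq_add]; exact hx.trans_le hδb)
      (by rw [sub_neg_eq_add]; exact hy.trans_le hδb)
  obtain ⟨c, hc0, hc⟩ := rate_gap (β / 2) (by linarith) mp hm hfix δ hδ
  have h2n : Tendsto (fun n : ℕ => 2 * n) atTop atTop :=
    tendsto_id.const_mul_atTop' (by norm_num)
  have hα2 : Tendsto (fun n : ℕ => α (2 * n)) atTop (nhds 0) := hα0.comp h2n
  have hNp2 : Tendsto (fun n : ℕ => p (2 * n) * n / 4) atTop atTop := by
    have := (hNp.comp h2n).atTop_div_const (by norm_num : (0:ℝ) < 8)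
    refine this.congr fun n => ?_
    simp only [Function.comp]
    push_cast
    ring
  set κ : ℕ → ℝ := fun n => α (2 * n) * (p (2 * n) * n / 4) with hκ
  have hκt : Tendsto κ atTop atTop := by
    have := (hpNα.comp h2n).atTop_div_const (by norm_num : (0:ℝ) < 8)
    refine this.congr fun n => ?_
    simp only [Function.comp, hκ]
    push_cast
    ring
  have hκm : Tendsto (fun n => 1 / (1 + κ n * (mp / 2) ^ 2)) atTop (nhds 0) := by
    have : Tendsto (fun n => 1 + κ n * (mp / 2) ^ 2) atTop atTop :=
      tendsto_atTop_add_const_left _ _ (hκt.atTop_mul_const (by positivity))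
    simpa only [one_div, Function.comp_def] using tendsto_inv_atTop_zero.comp this
  have herr : Tendsto (fun n : ℕ => 4 * ‖f‖ * ((2 * (n:ℝ) + 1) * Real.exp (-(c / 2 * n)) +
      1 / (1 + κ n * (mp / 2) ^ 2))) atTop (nhds 0) := by
    have := ((exp_term_tendsto (c / 2) (by positivity)).add hκm).const_mul (4 * ‖f‖)
    simpa using this
  have e1 : ∀ᶠ n : ℕ in atTop, 4 * ‖f‖ * ((2 * (n:ℝ) + 1) * Real.exp (-(c / 2 * n)) +
      1 / (1 + κ n * (mp / 2) ^ 2)) < η / 2 := herr.eventually (gt_mem_nhds (by positivity))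
  have e2 : ∀ᶠ n : ℕ in atTop, α (2 * n) < c / 4 := hα2.eventually (gt_mem_nhds (by positivity))
  have e3 : ∀ᶠ n : ℕ in atTop, Real.exp (8 * α (2 * n)) - 1 < (mp / 2) ^ 2 / 2 := by
    have : Tendsto (fun n : ℕ => Real.exp (8 * α (2 * n)) - 1) atTop (nhds 0) := by
      have h := ((Real.continuous_exp.tendsto (8 * 0)).comp (hα2.const_mul 8)).sub_const 1
      simpa [Function.comp_def] using h
    exact this.eventually (gt_mem_nhds (by positivity))
  have hlim : Tendsto (fun n : ℕ => Real.exp (-(p (2 * n) * n / 4))) atTop (nhds 0) :=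
    Real.tendsto_exp_neg_atTop_nhds_zero.comp hNp2
  refine tendsto_of_tendsto_of_tendsto_of_le_of_le' tendsto_const_nhds hlim
    (Eventually.of_forall fun n => bern_nonneg n _ (hp _) _) ?_
  filter_upwards [e1, e2, e3, eventually_gt_atTop 0] with n he1 he2 he3 hn
  refine (bern_mono n _ (hp _) _ _ ?_).trans (bern_tail n _ (hp _))
  intro ε hε
  by_contra hcon
  have hK : p (2 * n) * n / 4 ≤ epsK ε := not_lt.1 hcon
  have hα' := hαpos (2 * n)
  have hpn := (hp (2 * n)).1
  have hb := det_bound n hn f (α (2 * n)) β mp δ (η / 2) c hα'.le (by linarith) hm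
    (by positivity) hδc h1 h2 hc he3.le ε (κ n) (by positivity)
    (mul_le_mul_of_nonneg_left hK hα'.le)
  have hQ : Real.exp (α (2 * n) * n) * Real.exp (α (2 * n) * n) *
      ((2 * n + 1) * Real.exp (-(c * n))) ≤ (2 * (n:ℝ) + 1) * Real.exp (-(c / 2 * n)) := by
    rw [mul_left_comm, ← Real.exp_add, ← Real.exp_add]
    apply mul_le_mul_of_nonneg_left _ (by positivity)
    apply Real.exp_le_exp.2
    have hn' : (0:ℝ) < n := by exact_mod_cast hn
    nlinarith
  have hf4 : 0 ≤ 4 * ‖f‖ := by positivity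
  have hQ2 := mul_le_mul_of_nonneg_left
    (add_le_add_left hQ (1 / (1 + κ n * (mp / 2) ^ 2))) hf4
  have hε' : η < |(∫ x, f x ∂(dilMagDist n (α (2 * n)) β ε)) -
              ∫ x, f x ∂((2 : ENNReal)⁻¹ •
                (Measure.dirac ((mp, mp) : ℝ × ℝ) + Measure.dirac ((-mp, -mp) : ℝ × ℝ)))| := hε
  linarith

end
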